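/- Let A ∈ ℝ^{M×N}, η > 0, and W_n = Σ_{i=1}^{n} C(n,i)(−1)^{i−1}(η AᵀA)^{i−1}. If v ∈ ℝ^N is an eigenvector of AᵀA with eigenvalue μ, then v is an eigenvector of W_n with eigenvalue (1 − (1 − η μ)^n)/(η μ) when μ ≠ 0, and with eigenvalue n when μ = 0. -/

import Mathlib

open Matrix Finset

/-! Write `W_n = p_n(η AᵀA)`, where the polynomial `p_n` satisfies `X * p_n = 1 - (1 - X) ^ n` by
the binomial theorem. A polynomial in an operator acts on an eigenvector by its value at the
eigenvalue, here `p_n(ημ)`: for `ημ ≠ 0` divide the identity by `X`, for `μ = 0` read off the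
constant coefficient `C(n, 1)`. -/

open Polynomial

/-- The polynomial `p_n` with `W_n = p_n(η AᵀA)`, for the weighting matrix `W_n` of the accelerated
gradient step; the step size `η` is kept in the argument, so `p_n` depends on `n` only. -/
noncomputable def weightPolynomial (R : Type*) [CommRing R] (n : ℕ) : R[X] :=
  ∑ i ∈ Finset.Icc 1 n, ((n.choose i : R) * (-1) ^ (i - 1)) • X ^ (i - 1)

section WeightPolynomial

variable {R : Type*} [CommRing R]

theorem aeval_weightPolynomial {S : Type*} [Ring S] [Algebra R S] (n : ℕ) (a : S) :
    aeval a (weightPolynomial R n) =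
      ∑ i ∈ Finset.Icc 1 n, ((n.choose i : R) * (-1) ^ (i - 1)) • a ^ (i - 1) := by
  simp only [weightPolynomial, map_sum, map_smul, map_pow, aeval_X]

theorem X_mul_weightPolynomial (n : ℕ) :
    X * weightPolynomial R n = 1 - (1 - X) ^ n := by
  have binomial : (1 - X : R[X]) ^ n =
      1 + ∑ i ∈ Finset.Icc 1 n, (-X) ^ i * (n.choose i : R[X]) := by
    rw [sub_eq_neg_add, add_pow, Finset.range_eq_Ico,
      Finset.sum_eq_sum_Ico_succ_bot n.succ_pos, zero_add, Nat.succ_eq_add_one,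
      Finset.Ico_add_one_right_eq_Icc]
    simp only [one_pow, mul_one, pow_zero, Nat.choose_zero_right, Nat.cast_one]
  rw [binomial, sub_add_cancel_left, weightPolynomial, Finset.mul_sum, ← Finset.sum_neg_distrib]
  refine Finset.sum_congr rfl fun i hi => ?_
  obtain ⟨k, rfl⟩ := Nat.exists_eq_add_of_le' (Finset.mem_Icc.mp hi).1
  simp only [smul_eq_C_mul, map_mul, map_natCast, map_pow, map_neg, map_one, add_tsub_cancel_right,
    neg_pow (X : R[X])]
  ring

theorem mul_eval_weightPolynomial (n : ℕ) (x : R) :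
    x * (weightPolynomial R n).eval x = 1 - (1 - x) ^ n := by
  simpa using congrArg (eval x) (X_mul_weightPolynomial (R := R) n)

theorem eval_zero_weightPolynomial (n : ℕ) : (weightPolynomial R n).eval 0 = n := by
  cases n with
  | zero => simp [weightPolynomial]
  | succ n =>
    rw [weightPolynomial, eval_finsetSum, Finset.sum_eq_single_of_mem 1 (by simp)]
    · simp
    · intro i hi hi1
      have exponent_ne_zero : i - 1 ≠ 0 := by grind
      simp [exponent_ne_zero]

end WeightPolynomial

theorem eval_weightPolynomial_of_ne_zero {K : Type*} [Field K] (n : ℕ) {x : K} (hx : x ≠ 0) :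
    (weightPolynomial K n).eval x = (1 - (1 - x) ^ n) / x :=
  eq_div_of_mul_eq hx <| by rw [mul_comm, mul_eval_weightPolynomial]

theorem stmt5_general {K V : Type*} [Field K] [AddCommGroup V] [Module K V] (f : Module.End K V)
    {η : K} (hη : η ≠ 0) (n : ℕ) {v : V} {μ : K} (heig : f v = μ • v) :
    (μ ≠ 0 → (∑ i ∈ Finset.Icc 1 n,
        ((n.choose i : K) * (-1) ^ (i - 1)) • (η • f) ^ (i - 1)) v
          = ((1 - (1 - η * μ) ^ n) / (η * μ)) • v)
    ∧ (μ = 0 → (∑ i ∈ Finset.Icc 1 n,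
        ((n.choose i : K) * (-1) ^ (i - 1)) • (η • f) ^ (i - 1)) v
          = (n : K) • v) := by
  have heig' : (η • f) v = (η * μ) • v := by rw [LinearMap.smul_apply, heig, smul_smul]
  rw [← aeval_weightPolynomial, Module.End.aeval_apply_of_mem_apply_eq_smul heig']
  constructor
  · intro hμ
    rw [eval_weightPolynomial_of_ne_zero n (mul_ne_zero hη hμ)]
  · rintro rfl
    rw [mul_zero, eval_zero_weightPolynomial]

/-- If `v` is an eigenvector of `AᵀA` with eigenvalue `μ`, then `v` is an
eigenvector of `W_n = ∑_{i=1}^n C(n,i) (-1)^{i-1} (η AᵀA)^{i-1}` with eigenvalue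
`(1 - (1 - ημ)^n)/(ημ)` when `μ ≠ 0`, and with eigenvalue `n` when `μ = 0`. -/
theorem stmt5 {M N : ℕ} (A : Matrix (Fin M) (Fin N) ℝ) (η : ℝ) (hη : 0 < η) (n : ℕ)
    (v : Fin N → ℝ) (hv : v ≠ 0) (μ : ℝ)
    (heig : (Aᵀ * A).mulVec v = μ • v) :
    (μ ≠ 0 → (∑ i ∈ Finset.Icc 1 n,
        ((n.choose i : ℝ) * (-1) ^ (i - 1)) • (η • (Aᵀ * A)) ^ (i - 1)).mulVec v
          = ((1 - (1 - η * μ) ^ n) / (η * μ)) • v)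
    ∧ (μ = 0 → (∑ i ∈ Finset.Icc 1 n,
        ((n.choose i : ℝ) * (-1) ^ (i - 1)) • (η • (Aᵀ * A)) ^ (i - 1)).mulVec v
          = (n : ℝ) • v) := by
  simpa only [← map_smul, ← map_pow, ← map_sum, Matrix.toLinAlgEquiv'_apply] using
    stmt5_general (Matrix.toLinAlgEquiv' (Aᵀ * A)) hη.ne' n heig
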